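/- Let σ be a signature, k ≥ 1, and let 𝐀, 𝐀', 𝐁 be σ-structures with 𝐀 ≡_k 𝐀'. Then SA^k(𝐀,𝐁) is feasible if and only if SA^k(𝐀',𝐁) is feasible. -/

import Mathlib

attribute [local instance] Classical.propDecidable

set_option maxHeartbeats 1000000

noncomputable section

/-- A relational structure over the signature given by symbols `σ` with arities `ar`,
with universe `A`: for each relation symbol, a set of tuples. -/
structure Struct (σ : Type) (ar : σ → ℕ) (A : Type) : Type where
  rel : ∀ R : σ, Set (Fin (ar R) → A)

variable {σ : Type} {ar : σ → ℕ}

/-- The set of constraints of a structure: pairs `(R, 𝐚)` with `𝐚 ∈ R(AA)`. -/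
def Cons {A : Type} (AA : Struct σ ar A) : Type :=
  Σ R : σ, {u : Fin (ar R) → A // u ∈ AA.rel R}

instance Cons.finite {A : Type} [Finite σ] [Finite A] {AA : Struct σ ar A} :
    Finite (Cons AA) :=
  inferInstanceAs (Finite (Σ R : σ, {u : Fin (ar R) → A // u ∈ AA.rel R}))

noncomputable instance Cons.fintype {A : Type} [Fintype σ] [Fintype A] {AA : Struct σ ar A} :
    Fintype (Cons AA) := Fintype.ofFinite _

/-- Labels `(S, R)` with `R ∈ σ` and `S ⊆ [arity R]`. -/
abbrev Label (σ : Type) (ar : σ → ℕ) : Type := Σ R : σ, Finset (Fin (ar R))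

/-- The entry of the matrix representation `M_AA` of a structure at `(a, R(𝐚))`:
the label `(S, R)` with `S = {i : 𝐚[i] = a}`. -/
def lab {A : Type} (AA : Struct σ ar A) (a : A) (c : Cons AA) : Label σ ar :=
  ⟨c.1, Finset.univ.filter fun i => c.2.1 i = a⟩

/-- The 0/1 matrix `M_AA^ℓ`. -/
def labMat {A : Type} (AA : Struct σ ar A) (ℓ : Label σ ar) : Matrix A (Cons AA) ℝ :=
  fun a c => if lab AA a c = ℓ then 1 else 0

/-- A doubly stochastic matrix: non-negative entries, all rows and all columns sum to 1. -/
def IsDoublyStochastic {α β : Type} [Fintype α] [Fintype β] (X : Matrix α β ℝ) : Prop :=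
  (∀ i j, 0 ≤ X i j) ∧ (∀ i, ∑ j, X i j = 1) ∧ (∀ j, ∑ i, X i j = 1)

/-- A left stochastic matrix: non-negative entries, all columns sum to 1. -/
def IsLeftStochastic {α β : Type} [Fintype α] (X : Matrix α β ℝ) : Prop :=
  (∀ i j, 0 ≤ X i j) ∧ (∀ j, ∑ i, X i j = 1)

/-- Fractional isomorphism: doubly stochastic `X`, `Y` with
`X M_AA^ℓ = M_BB^ℓ Y` and `M_AA^ℓ Yᵀ = Xᵀ M_BB^ℓ` for every label `ℓ`. -/
def FracIso {A B : Type} [Fintype σ] [Fintype A] [Fintype B]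
    (AA : Struct σ ar A) (BB : Struct σ ar B) : Prop :=
  ∃ (X : Matrix B A ℝ) (Y : Matrix (Cons BB) (Cons AA) ℝ),
    IsDoublyStochastic X ∧ IsDoublyStochastic Y ∧
    ∀ ℓ : Label σ ar,
      X * labMat AA ℓ = labMat BB ℓ * Y ∧
      labMat AA ℓ * Y.transpose = X.transpose * labMat BB ℓ

/-- The type of iterated degrees of depth `k`. -/
def DegT (L : Type) : ℕ → Type
  | 0 => Bool
  | k + 1 => Multiset (L × DegT L k)

/-- The iterated degree `δ_k` of an element or a constraint of a structure. -/
def iterDeg {A : Type} [Fintype σ] [Fintype A] (AA : Struct σ ar A) :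
    (k : ℕ) → A ⊕ Cons AA → DegT (Label σ ar) k
  | 0, x => x.isLeft
  | k + 1, Sum.inl a =>
      (Finset.univ.val.map fun c : Cons AA => (lab AA a c, iterDeg AA k (Sum.inr c)) :
        Multiset (Label σ ar × DegT (Label σ ar) k))
  | k + 1, Sum.inr c =>
      (Finset.univ.val.map fun a : A => (lab AA a c, iterDeg AA k (Sum.inl a)) :
        Multiset (Label σ ar × DegT (Label σ ar) k))

/-- Two structures have the same iterated degree sequence. -/
def SameIterDeg {A B : Type} [Fintype σ] [Fintype A] [Fintype B]
    (AA : Struct σ ar A) (BB : Struct σ ar B) : Prop :=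
  ∀ k : ℕ,
    Multiset.map (iterDeg AA k) (Finset.univ.val : Multiset (A ⊕ Cons AA)) =
    Multiset.map (iterDeg BB k) (Finset.univ.val : Multiset (B ⊕ Cons BB))
/-- An equitable partition of a structure, given by index maps `p` (on the universe)
and `q` (on the constraints) together with its parameters `cpar`, `dpar`. -/
def IsEquitable {A : Type} (AA : Struct σ ar A) {I : Type u} {J : Type v}
    (p : A → I) (q : Cons AA → J)
    (cpar : Label σ ar → I → J → ℕ) (dpar : Label σ ar → J → I → ℕ) : Prop :=
  (∀ (a : A) (ℓ : Label σ ar) (j : J),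
      Nat.card {c : Cons AA // q c = j ∧ lab AA a c = ℓ} = cpar ℓ (p a) j) ∧
  (∀ (c : Cons AA) (ℓ : Label σ ar) (i : I),
      Nat.card {a : A // p a = i ∧ lab AA a c = ℓ} = dpar ℓ (q c) i)

/-- Two structures have a common equitable partition: equitable partitions with the same
index sets, the same parameters, and corresponding classes of equal sizes. -/
def CommonEquitable {A B : Type} (AA : Struct σ ar A) (BB : Struct σ ar B) : Prop :=
  ∃ (I J : Type) (pA : A → I) (qA : Cons AA → J) (pB : B → I) (qB : Cons BB → J)
    (cpar : Label σ ar → I → J → ℕ) (dpar : Label σ ar → J → I → ℕ),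
    IsEquitable AA pA qA cpar dpar ∧ IsEquitable BB pB qB cpar dpar ∧
    (∀ i : I, Nat.card {a : A // pA a = i} = Nat.card {b : B // pB b = i}) ∧
    (∀ j : J, Nat.card {c : Cons AA // qA c = j} = Nat.card {c : Cons BB // qB c = j})

/-- `h` is a homomorphism from `AA` to `BB`. -/
def IsHom {A B : Type} (AA : Struct σ ar A) (BB : Struct σ ar B) (h : A → B) : Prop :=
  ∀ (R : σ) (u : Fin (ar R) → A), u ∈ AA.rel R → (fun i => h (u i)) ∈ BB.rel R

/-- The number of homomorphisms from `AA` to `BB`. -/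
def homCount {A B : Type} (AA : Struct σ ar A) (BB : Struct σ ar B) : ℕ :=
  Nat.card {h : A → B // IsHom AA BB h}

/-- The number of homomorphisms from `(TT, t)` to `(DD, d)` (with a designated element). -/
def rhomCount {T D : Type} (TT : Struct σ ar T) (t : T) (DD : Struct σ ar D) (d : D) : ℕ :=
  Nat.card {h : T → D // IsHom TT DD h ∧ h t = d}

/-- The factor graph of a structure: bipartite graph on elements and constraints. -/
def factorGraph {A : Type} (AA : Struct σ ar A) : SimpleGraph (A ⊕ Cons AA) :=
  SimpleGraph.fromRel fun x y =>
    ∃ (a : A) (c : Cons AA), x = Sum.inl a ∧ y = Sum.inr c ∧ ∃ i, c.2.1 i = a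

/-- A structure is an ftree if its factor graph is a tree. -/
def IsFtree {A : Type} (AA : Struct σ ar A) : Prop := (factorGraph AA).IsTree
/-- The set `{𝐚}` of elements occurring in the tuple of a constraint, as a Finset. -/
def tsupp {A : Type} {AA : Struct σ ar A} (c : Cons AA) : Finset A :=
  Finset.univ.image c.2.1

lemma mem_tsupp {A : Type} {AA : Struct σ ar A} (c : Cons AA) (i : Fin (ar c.1)) :
    c.2.1 i ∈ tsupp c :=
  Finset.mem_image_of_mem _ (Finset.mem_univ i)

/-- Feasibility of the system `SA^k(AA, BB)`. -/
def SAfeasible {A B : Type} [Fintype B] (k : ℕ)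
    (AA : Struct σ ar A) (BB : Struct σ ar B) : Prop :=
  ∃ (pV : (V : Finset A) → ({x // x ∈ V} → B) → ℝ)
    (pC : (c : Cons AA) → ({x // x ∈ tsupp c} → B) → ℝ),
    -- all variables take values in [0,1]
    (∀ (V : Finset A) (f : {x // x ∈ V} → B),
        V.Nonempty → V.card ≤ k → 0 ≤ pV V f ∧ pV V f ≤ 1) ∧
    (∀ (c : Cons AA) (f : {x // x ∈ tsupp c} → B), 0 ≤ pC c f ∧ pC c f ≤ 1) ∧
    -- (SA1)
    (∀ V : Finset A, V.Nonempty → V.card ≤ k →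
        ∑ f : {x // x ∈ V} → B, pV V f = 1) ∧
    -- (SA2)
    (∀ (U V : Finset A) (hUV : U ⊆ V), U.Nonempty → V.card ≤ k →
        ∀ f : {x // x ∈ U} → B,
          pV U f = ∑ g : {x // x ∈ V} → B,
            if ∀ u : {x // x ∈ U}, g ⟨u.1, hUV u.2⟩ = f u then pV V g else 0) ∧
    -- (SA3)
    (∀ (c : Cons AA) (U : Finset A) (hU : U ⊆ tsupp c), U.Nonempty → U.card ≤ k →
        ∀ f : {x // x ∈ U} → B,
          pV U f = ∑ g : {x // x ∈ tsupp c} → B,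
            if ∀ u : {x // x ∈ U}, g ⟨u.1, hU u.2⟩ = f u then pC c g else 0) ∧
    -- (SA4)
    (∀ (c : Cons AA) (f : {x // x ∈ tsupp c} → B),
        (fun i => f ⟨c.2.1 i, mem_tsupp c i⟩) ∉ BB.rel c.1 → pC c f = 0)

/-- The relation symbols of the signature `σ*_k`. -/
inductive StarSym (σ : Type) (ar : σ → ℕ) (k : ℕ) : Type
  | TS (j : Fin k) (S : Finset (Fin (j.1 + 1)))
  | TI (j j' : Fin k) (iv : Fin (j'.1 + 1) → Fin (j.1 + 1))
  | RS (R : σ) (S : Finset (Fin (ar R)))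
  | RI (R : σ) (j : Fin k) (iv : Fin (j.1 + 1) → Fin (ar R))

/-- Arities for `σ*_k`. -/
def starAr {k : ℕ} : StarSym σ ar k → ℕ
  | .TS _ _ => 1
  | .TI _ _ _ => 2
  | .RS _ _ => 1
  | .RI _ _ _ => 2

/-- The universe of `AA*_k`: all tuples of length `1 ≤ j ≤ k` together with the constraints. -/
def StarUniv {A : Type} (AA : Struct σ ar A) (k : ℕ) : Type :=
  ((j : Fin k) × (Fin (j.1 + 1) → A)) ⊕ Cons AA

instance StarUniv.finite {A : Type} [Finite σ] [Finite A] {AA : Struct σ ar A} {k : ℕ} :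
    Finite (StarUniv AA k) :=
  inferInstanceAs (Finite (((j : Fin k) × (Fin (j.1 + 1) → A)) ⊕ Cons AA))

noncomputable instance StarUniv.fintype {A : Type} [Fintype σ] [Fintype A]
    {AA : Struct σ ar A} {k : ℕ} : Fintype (StarUniv AA k) := Fintype.ofFinite _

/-- The structure `AA*_k`. -/
def starStruct {A : Type} (AA : Struct σ ar A) (k : ℕ) :
    Struct (StarSym σ ar k) starAr (StarUniv AA k) where
  rel
    | .TS j S => {u | ∃ v : Fin (j.1 + 1) → A,
        (∀ i ∈ S, ∀ i' ∈ S, v i = v i') ∧ u = fun _ => Sum.inl ⟨j, v⟩}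
    | .TI j j' iv => {u | ∃ v : Fin (j.1 + 1) → A,
        u = ![Sum.inl ⟨j, v⟩, Sum.inl ⟨j', v ∘ iv⟩]}
    | .RS R S => {u | ∃ (v : Fin (ar R) → A) (hv : v ∈ AA.rel R),
        (∀ i ∈ S, ∀ i' ∈ S, v i = v i') ∧ u = fun _ => Sum.inr ⟨R, ⟨v, hv⟩⟩}
    | .RI R j iv => {u | ∃ (v : Fin (ar R) → A) (hv : v ∈ AA.rel R),
        u = ![Sum.inr ⟨R, ⟨v, hv⟩⟩, Sum.inl ⟨j, v ∘ iv⟩]}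

/-- `AA ≡_k BB` : the structures `AA*_k` and `BB*_k` have a common equitable partition. -/
def EquivK {A B : Type} (k : ℕ) (AA : Struct σ ar A) (BB : Struct σ ar B) : Prop :=
  CommonEquitable (starStruct AA k) (starStruct BB k)

/-- A bundled σ-structure with finite universe. -/
structure FinStruct (σ : Type) (ar : σ → ℕ) : Type 1 where
  carrier : Type
  [fin : Fintype carrier]
  str : Struct σ ar carrier

/-- One step in a chain: either a homomorphism exists, or the structures are
`≡_1`-equivalent (i.e. have a common equitable partition). -/
def FStep (X Y : FinStruct σ ar) : Prop :=
  (∃ h : X.carrier → Y.carrier, IsHom X.str Y.str h) ∨ CommonEquitable X.str Y.str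

/-- The structure `AA` has treewidth `< k`: there is a tree-decomposition all of whose
bags have at most `k` elements. -/
def HasTreewidthLT {A : Type} (AA : Struct σ ar A) (k : ℕ) : Prop :=
  ∃ (V : Type) (G : SimpleGraph V) (β : V → Finset A),
    G.IsTree ∧
    (∀ c : Cons AA, ∃ v : V, ∀ i, c.2.1 i ∈ β v) ∧
    (∀ (a : A) (u v : V), a ∈ β u → a ∈ β v →
      ∀ p : G.Walk u v, p.IsPath → ∀ w ∈ p.support, a ∈ β w) ∧
    (∀ v : V, (β v).card ≤ k)
/-- The adjacency matrix of a graph (a structure with one binary relation). -/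
def adjMat {A : Type} (AA : Struct Unit (fun _ => 2) A) : Matrix A A ℝ :=
  fun a a' => if ![a, a'] ∈ AA.rel () then 1 else 0

/-- A matrix is decomposable if, up to partitioning rows and columns into two
(nontrivial) blocks, it is a direct sum. -/
def MDecomposable {V W : Type} (M : Matrix V W ℝ) : Prop :=
  ∃ (SV : Set V) (SW : Set W),
    (SV.Nonempty ∨ SW.Nonempty) ∧ (SVᶜ.Nonempty ∨ SWᶜ.Nonempty) ∧
    ∀ v w, (v ∈ SV ∧ w ∉ SW) ∨ (v ∉ SV ∧ w ∈ SW) → M v w = 0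

/-- A bundled rooted ftree. -/
structure RootedFtree (σ : Type) (ar : σ → ℕ) : Type 1 where
  carrier : Type
  [fin : Fintype carrier]
  str : Struct σ ar carrier
  isFtree : IsFtree str
  root : carrier

/-- The profile of an element: the number of homomorphisms from each rooted ftree
mapping the root to it. -/
def degProfile {D : Type} (DD : Struct σ ar D) (d : D) : RootedFtree σ ar → ℕ :=
  fun F => rhomCount F.str F.root DD d

/-- The class of a constraint: its relation symbol, its equality pattern, and the
`degProfile`-classes of its coordinates. -/
def qProfile {D : Type} (DD : Struct σ ar D) (c : Cons DD) :
    Σ R : σ, Set (Fin (ar R) × Fin (ar R)) × (Fin (ar R) → (RootedFtree σ ar → ℕ)) :=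
  ⟨c.1, ({p | c.2.1 p.1 = c.2.1 p.2}, fun s => degProfile DD (c.2.1 s))⟩

/-- Number of homomorphisms with a designated element and a designated constraint. -/
def rhomCount2 {T D : Type} (TT : Struct σ ar T) (t : T) (c : Cons TT)
    (DD : Struct σ ar D) (d : D) (c' : Cons DD) : ℕ :=
  Nat.card {h : T → D // IsHom TT DD h ∧ h t = d ∧
    (⟨c.1, fun i => h (c.2.1 i)⟩ : Σ R : σ, Fin (ar R) → D) = ⟨c'.1, c'.2.1⟩}

/-- `(t, R(𝐭))` can be mapped to `(d, R'(𝐝))`. -/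
def CanMap {T D : Type} {TT : Struct σ ar T} {DD : Struct σ ar D}
    (t : T) (c : Cons TT) (d : D) (c' : Cons DD) : Prop :=
  ∃ hR : c.1 = c'.1,
    (∀ s s' : Fin (ar c.1), c.2.1 s = c.2.1 s' →
        c'.2.1 (Fin.cast (congrArg ar hR) s) = c'.2.1 (Fin.cast (congrArg ar hR) s')) ∧
    (∀ s : Fin (ar c.1), c.2.1 s = t → c'.2.1 (Fin.cast (congrArg ar hR) s) = d)

/-- A substructure of a structure: a subset of the universe together with a subset of
the tuples of each relation, lying inside the subset. -/
structure Substr {A : Type} (AA : Struct σ ar A) : Type where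
  carrier : Set A
  srel : ∀ R : σ, Set (Fin (ar R) → A)
  srel_sub : ∀ R : σ, srel R ⊆ AA.rel R
  srel_mem : ∀ R : σ, ∀ u ∈ srel R, ∀ i, u i ∈ carrier

/-- The substructure as a structure in its own right. -/
def Substr.toStruct {A : Type} {AA : Struct σ ar A} (Q : Substr AA) :
    Struct σ ar {x // x ∈ Q.carrier} where
  rel R := {u | (fun i => (u i).1) ∈ Q.srel R}

/-- Containment of substructures. -/
def Substr.le {A : Type} {AA : Struct σ ar A} (Q Q' : Substr AA) : Prop :=
  Q.carrier ⊆ Q'.carrier ∧ ∀ R : σ, Q.srel R ⊆ Q'.srel R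

/-- A subftree of `TT` avoiding the constraint `c`, containing a unique element of the
tuple of `c`, which moreover participates in exactly one constraint of the subftree. -/
def GoodPiece {T : Type} (TT : Struct σ ar T) (c : Cons TT) (Q : Substr TT) : Prop :=
  IsFtree Q.toStruct ∧
  c.2.1 ∉ Q.srel c.1 ∧
  ∃ x ∈ Q.carrier, (∃ i, c.2.1 i = x) ∧
    (∀ y ∈ Q.carrier, (∃ i, c.2.1 i = y) → y = x) ∧
    (∃! e : Σ R : σ, {u // u ∈ Q.srel R}, ∃ i, e.2.1 i = x)

/-- The collection `TT \ c` of maximal subftrees as above. -/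
def TreeMinus {T : Type} (TT : Struct σ ar T) (c : Cons TT) : Set (Substr TT) :=
  {Q | GoodPiece TT c Q ∧ ∀ Q' : Substr TT, GoodPiece TT c Q' → Q.le Q' → Q'.le Q}

/-- The disjoint union of two structures. -/
def dUnion {A B : Type} (AA : Struct σ ar A) (BB : Struct σ ar B) :
    Struct σ ar (A ⊕ B) where
  rel R := {u | (∃ v ∈ AA.rel R, u = fun i => Sum.inl (v i)) ∨
                (∃ v ∈ BB.rel R, u = fun i => Sum.inr (v i))}

/-- Embedding of constraints of `AA` into constraints of the disjoint union. -/
def consInl {A B : Type} (AA : Struct σ ar A) (BB : Struct σ ar B) (c : Cons AA) :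
    Cons (dUnion AA BB) :=
  ⟨c.1, ⟨fun i => Sum.inl (c.2.1 i), Or.inl ⟨c.2.1, c.2.2, rfl⟩⟩⟩

/-- Embedding of constraints of `BB` into constraints of the disjoint union. -/
def consInr {A B : Type} (AA : Struct σ ar A) (BB : Struct σ ar B) (c : Cons BB) :
    Cons (dUnion AA BB) :=
  ⟨c.1, ⟨fun i => Sum.inr (c.2.1 i), Or.inr ⟨c.2.1, c.2.2, rfl⟩⟩⟩

/-- The stable-degree class of an element of the disjoint union: its full iterated
degree sequence. -/
def degPclass {A B : Type} [Fintype σ] [Fintype A] [Fintype B]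
    (AA : Struct σ ar A) (BB : Struct σ ar B) (x : A ⊕ B) :
    (k : ℕ) → DegT (Label σ ar) k :=
  fun k => iterDeg (dUnion AA BB) k (Sum.inl x)

/-- The stable-degree class of a constraint of the disjoint union. -/
def degQclass {A B : Type} [Fintype σ] [Fintype A] [Fintype B]
    (AA : Struct σ ar A) (BB : Struct σ ar B) (c : Cons (dUnion AA BB)) :
    (k : ℕ) → DegT (Label σ ar) k :=
  fun k => iterDeg (dUnion AA BB) k (Sum.inr c)
/-- The set `Y`: tuples in `(B × [m])^m` with no repeated entries, in which the copy
index of each entry is bounded by the number of occurrences of its `B`-component. -/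
def Ytype (B : Type) (m : ℕ) : Type :=
  {y : Fin m → B × Fin m // Function.Injective y ∧
    ∀ i, ((y i).2 : ℕ) + 1 ≤ Nat.card {j : Fin m // (y j).1 = (y i).1}}

/-- Permuting the coordinates of an element of `Y`. -/
def permY {B : Type} {m : ℕ} (τ : Equiv.Perm (Fin m)) (y : Ytype B m) : Ytype B m :=
  ⟨fun i => y.1 (τ i), y.2.1.comp τ.injective, fun i => by
    have h := y.2.2 (τ i)
    have hc : Nat.card {j : Fin m // (y.1 (τ j)).1 = (y.1 (τ i)).1}
        = Nat.card {j : Fin m // (y.1 j).1 = (y.1 (τ i)).1} :=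
      Nat.card_congr (τ.subtypeEquiv fun j => Iff.rfl)
    exact le_trans h (le_of_eq hc.symm)⟩

/-- The structure `X₁` from the proof of Theorem `thm:SA1`, built from a choice
function `choice` selecting a canonical element of `Y` for each multiset. -/
def X1struct {A B : Type} (AA : Struct σ ar A) (BB : Struct σ ar B) (m : ℕ)
    (choice : (Fin m → B) → Ytype B m) : Struct σ ar (A × Ytype B m) where
  rel R := {u | ∃ a : Fin (ar R) → A, a ∈ AA.rel R ∧
    ∃ tt : Fin m → Fin (ar R) → B,
      (∀ i, tt i ∈ BB.rel R) ∧
      (∀ i s s', a s = a s' → tt i s = tt i s') ∧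
      ∃ τ : Equiv.Perm (Fin m),
        u = fun s => (a s, permY τ (choice fun i => tt i s))}


section Proof11

set_option linter.unusedSectionVars false

/-- Average of `F` over the class `i`. -/
def avgOn {X : Type} [Fintype X] {I : Type} (p : X → I) (i : I) (F : X → ℝ) : ℝ :=
  (∑ x ∈ Finset.univ.filter (fun x => p x = i), F x) /
    ((Finset.univ.filter (fun x => p x = i)).card : ℝ)

lemma avgOn_congr {X : Type} [Fintype X] {I : Type} (p : X → I) (i : I) (F G : X → ℝ)
    (h : ∀ x, p x = i → F x = G x) : avgOn p i F = avgOn p i G := by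
  unfold avgOn
  congr 1
  exact Finset.sum_congr rfl fun x hx => h x (Finset.mem_filter.1 hx).2

lemma avgOn_nonneg {X : Type} [Fintype X] {I : Type} (p : X → I) (i : I) (F : X → ℝ)
    (h : ∀ x, 0 ≤ F x) : 0 ≤ avgOn p i F :=
  div_nonneg (Finset.sum_nonneg fun x _ => h x) (Nat.cast_nonneg _)

lemma avgOn_le_one {X : Type} [Fintype X] {I : Type} (p : X → I) (i : I) (F : X → ℝ)
    (h : ∀ x, F x ≤ 1) : avgOn p i F ≤ 1 := by
  unfold avgOn
  apply div_le_one_of_le₀ _ (Nat.cast_nonneg _)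
  calc _ ≤ ∑ x ∈ Finset.univ.filter (fun x => p x = i), (1 : ℝ) :=
        Finset.sum_le_sum fun x _ => h x
    _ = _ := by simp

lemma avgOn_one {X : Type} [Fintype X] {I : Type} (p : X → I) (i : I) (F : X → ℝ)
    (h : ∀ x, p x = i → F x = 1) (hne : ∃ x, p x = i) : avgOn p i F = 1 := by
  rw [avgOn_congr p i F (fun _ => 1) h]
  unfold avgOn
  obtain ⟨x, hx⟩ := hne
  have : (Finset.univ.filter (fun x => p x = i)).Nonempty := ⟨x, by simpa using hx⟩
  have h2 : ((Finset.univ.filter (fun x => p x = i)).card : ℝ) ≠ 0 := by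
    exact_mod_cast this.card_pos.ne'
  simp [h2]

lemma avgOn_sum {X : Type} [Fintype X] {I : Type} (p : X → I) (i : I) {G : Type} [Fintype G]
    (P : G → Prop) [DecidablePred P] (F : G → X → ℝ) :
    (∑ g, if P g then avgOn p i (F g) else 0) =
      avgOn p i (fun x => ∑ g, if P g then F g x else 0) := by
  unfold avgOn
  rw [Finset.sum_comm, Finset.sum_div]
  refine Finset.sum_congr rfl fun g _ => ?_
  split_ifs <;> simp

lemma lab_spec {τ : Type} {art : τ → ℕ} {X X' : Type} {XX : Struct τ art X}
    {XX' : Struct τ art X'} {x : X} {c : Cons XX} {x' : X'} {R : τ} {u' : Fin (art R) → X'}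
    {hu' : u' ∈ XX'.rel R}
    (h : lab XX x c = lab XX' x' ⟨R, ⟨u', hu'⟩⟩) :
    ∃ (u : Fin (art R) → X) (hu : u ∈ XX.rel R), c = ⟨R, ⟨u, hu⟩⟩ ∧
      ∀ i, u i = x ↔ u' i = x' := by
  obtain ⟨R0, u, hu⟩ := c
  unfold lab at h
  rw [Sigma.mk.injEq] at h
  obtain ⟨h1, h2⟩ := h
  simp only at h1
  subst h1
  refine ⟨u, hu, rfl, fun i => ?_⟩
  have := Finset.ext_iff.1 (eq_of_heq h2) i
  simpa using this

section
variable {τ : Type} {art : τ → ℕ} [Finite τ] {X X' : Type} [Fintype X] [Fintype X']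
  {XX : Struct τ art X} {XX' : Struct τ art X'} {I J : Type}
  {p : X → I} {q : Cons XX → J} {p' : X' → I} {q' : Cons XX' → J}
  {cpar : Label τ art → I → J → ℕ} {dpar : Label τ art → J → I → ℕ}

lemma exists_cons (hE : IsEquitable XX p q cpar dpar) (hE' : IsEquitable XX' p' q' cpar dpar)
    (x : X) (x' : X') (hx : p x = p' x') (c' : Cons XX') :
    ∃ c, q c = q' c' ∧ lab XX x c = lab XX' x' c' := by
  have h1 := hE.1 x (lab XX' x' c') (q' c')
  have h2 := hE'.1 x' (lab XX' x' c') (q' c')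
  rw [hx, ← h2] at h1
  have hne : Nonempty {c : Cons XX' // q' c = q' c' ∧ lab XX' x' c = lab XX' x' c'} :=
    ⟨⟨c', rfl, rfl⟩⟩
  have h3 := Nat.card_pos (α := {c : Cons XX' // q' c = q' c' ∧ lab XX' x' c = lab XX' x' c'})
  rw [← h1] at h3
  obtain ⟨⟨c, hc⟩⟩ := (Nat.card_pos_iff.1 h3).1
  exact ⟨c, hc⟩

lemma cons_mk_inj {R : τ} {u u2 : Fin (art R) → X} {hu : u ∈ XX.rel R} {hu2 : u2 ∈ XX.rel R}
    (h : @Eq (Cons XX) ⟨R, ⟨u, hu⟩⟩ ⟨R, ⟨u2, hu2⟩⟩) : u = u2 := by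
  have h1 := (Sigma.mk.injEq _ _ _ _ ▸ h).2
  exact congrArg Subtype.val (eq_of_heq h1)

lemma avg_aux (hE : IsEquitable XX p q cpar dpar) (hE' : IsEquitable XX' p' q' cpar dpar)
    (c' : Cons XX') (i0 : Fin (art c'.1)) [Fintype {c : Cons XX // q c = q' c'}] :
    ∃ (m : ℝ) (s : {c : Cons XX // q c = q' c'} → X), 0 < m ∧
      (∀ c, p (s c) = p' (c'.2.1 i0) ∧ lab XX (s c) c.1 = lab XX' (c'.2.1 i0) c') ∧
      ∀ (G : X → ℝ),
        m * ∑ x ∈ Finset.univ.filter (fun x => p x = p' (c'.2.1 i0)), G x =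
          ∑ c : {c : Cons XX // q c = q' c'}, G (s c) := by
  set x' := c'.2.1 i0 with hx'
  set ℓ := lab XX' x' c' with hℓ
  have key : ∀ c : {c : Cons XX // q c = q' c'}, ∃ x : X,
      (p x = p' x' ∧ lab XX x c.1 = ℓ) ∧ ∀ y, lab XX y c.1 = ℓ → y = x := by
    rintro ⟨c, hc⟩
    have h1 := hE.2 c ℓ (p' x')
    have h2 := hE'.2 c' ℓ (p' x')
    rw [hc, ← h2] at h1
    have hne : Nonempty {a : X' // p' a = p' x' ∧ lab XX' a c' = ℓ} := ⟨⟨x', rfl, rfl⟩⟩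
    have h3 := Nat.card_pos (α := {a : X' // p' a = p' x' ∧ lab XX' a c' = ℓ})
    rw [← h1] at h3
    obtain ⟨⟨x, hx⟩⟩ := (Nat.card_pos_iff.1 h3).1
    refine ⟨x, hx, fun y hy => ?_⟩
    obtain ⟨R, u', hu'⟩ := c'
    obtain ⟨u, hu, rfl, h5⟩ := lab_spec hx.2
    obtain ⟨u2, hu2, h4, h6⟩ := lab_spec hy
    have : u = u2 := cons_mk_inj h4
    subst this
    rw [← (h5 i0).2 rfl, ← (h6 i0).2 rfl]
  choose s hs1 hs2 using key
  refine ⟨(cpar ℓ (p' x') (q' c') : ℝ), s, ?_, hs1, fun G => ?_⟩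
  · have h2 := hE'.1 x' ℓ (q' c')
    have hne : Nonempty {c : Cons XX' // q' c = q' c' ∧ lab XX' x' c = ℓ} := ⟨⟨c', rfl, rfl⟩⟩
    have h3 := Nat.card_pos (α := {c : Cons XX' // q' c = q' c' ∧ lab XX' x' c = ℓ})
    rw [h2] at h3
    exact_mod_cast h3
  · have e1 : ∀ c : {c : Cons XX // q c = q' c'}, G (s c) =
        ∑ x ∈ Finset.univ.filter (fun x => p x = p' x'),
          if lab XX x c.1 = ℓ then G x else 0 := by
      intro c
      rw [Finset.sum_eq_single (s c)]
      · rw [if_pos (hs1 c).2]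
      · intro y _ hy
        rw [if_neg]
        exact fun h => hy (hs2 c y h)
      · intro h
        exact absurd (by simpa using (hs1 c).1) h
    rw [Finset.sum_congr rfl (fun c _ => e1 c), Finset.sum_comm, Finset.mul_sum]
    refine Finset.sum_congr rfl fun x hx => ?_
    have hx2 := (Finset.mem_filter.1 hx).2
    rw [← Finset.sum_filter, Finset.sum_const, nsmul_eq_mul]
    congr 2
    rw [← hx2, ← hE.1 x ℓ (q' c'), ← Fintype.card_subtype, ← Nat.card_eq_fintype_card]
    exact Nat.card_congr
      { toFun := fun c => ⟨⟨c.1, c.2.1⟩, c.2.2⟩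
        invFun := fun c => ⟨c.1.1, c.1.2, c.2⟩
        left_inv := fun _ => rfl
        right_inv := fun _ => rfl }

lemma avg_eq (hE : IsEquitable XX p q cpar dpar) (hE' : IsEquitable XX' p' q' cpar dpar)
    (c' : Cons XX') (i0 i1 : Fin (art c'.1)) (G F : X → ℝ)
    (H : ∀ c x y, lab XX x c = lab XX' (c'.2.1 i0) c' → lab XX y c = lab XX' (c'.2.1 i1) c' →
      p x = p' (c'.2.1 i0) → G x = F y) :
    avgOn p (p' (c'.2.1 i0)) G = avgOn p (p' (c'.2.1 i1)) F := by
  have : Fintype {c : Cons XX // q c = q' c'} := Fintype.ofFinite _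
  obtain ⟨m0, s0, hm0, h0, k0⟩ := avg_aux hE hE' c' i0
  obtain ⟨m1, s1, hm1, h1, k1⟩ := avg_aux hE hE' c' i1
  have a1 : ∑ c, G (s0 c) = ∑ c, F (s1 c) :=
    Finset.sum_congr rfl fun c _ => H c.1 _ _ (h0 c).2 (h1 c).2 (h0 c).1
  have a2 := (k0 (fun _ => 1)).trans (k1 (fun _ => 1)).symm
  rw [← k0 G, ← k1 F] at a1
  simp only [Finset.sum_const, nsmul_eq_mul, mul_one] at a2
  unfold avgOn
  rw [← mul_div_mul_left _ _ hm0.ne', a1, a2, mul_div_mul_left _ _ hm1.ne']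

end

instance StarSym.finite [Finite σ] (k : ℕ) : Finite (StarSym σ ar k) := by
  let f : StarSym σ ar k →
      ((Σ j : Fin k, Finset (Fin (j.1 + 1))) ⊕
        (Σ j : Fin k, Σ j' : Fin k, Fin (j'.1 + 1) → Fin (j.1 + 1))) ⊕
      ((Σ R : σ, Finset (Fin (ar R))) ⊕ (Σ R : σ, Σ j : Fin k, Fin (j.1 + 1) → Fin (ar R))) :=
    fun
    | .TS j S => .inl (.inl ⟨j, S⟩)
    | .TI j j' iv => .inl (.inr ⟨j, j', iv⟩)
    | .RS R S => .inr (.inl ⟨R, S⟩)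
    | .RI R j iv => .inr (.inr ⟨R, j, iv⟩)
  apply Finite.of_injective f
  rintro (_ | _ | _ | _) (_ | _ | _ | _) h <;> simp [f] at h ⊢ <;> grind

/-- Pushforward of a function on assignments along the tuple `t`. -/
def push {A B : Type} [Fintype B] {V : Finset A} (Q : ({x // x ∈ V} → B) → ℝ) {n : ℕ}
    (t : Fin n → {x // x ∈ V}) (b : Fin n → B) : ℝ :=
  ∑ g : {x // x ∈ V} → B, if g ∘ t = b then Q g else 0

lemma push_bounds {A B : Type} [Fintype B] {V : Finset A} (Q : ({x // x ∈ V} → B) → ℝ) {n : ℕ}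
    (t : Fin n → {x // x ∈ V}) (ht : Function.Surjective t) (b : Fin n → B)
    (hQ : ∀ g, 0 ≤ Q g ∧ Q g ≤ 1) : 0 ≤ push Q t b ∧ push Q t b ≤ 1 := by
  unfold push
  constructor
  · refine Finset.sum_nonneg fun g _ => ?_
    split_ifs
    exacts [(hQ g).1, le_rfl]
  · by_cases h : ∃ g : {x // x ∈ V} → B, g ∘ t = b
    · obtain ⟨g, hg⟩ := h
      rw [Finset.sum_eq_single g]
      · rw [if_pos hg]; exact (hQ g).2
      · intro g' _ hg'
        rw [if_neg]
        intro h
        exact hg' (ht.injective_comp_right (h.trans hg.symm))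
      · simp
    · push Not at h
      rw [Finset.sum_eq_zero fun g _ => if_neg (h g)]
      exact zero_le_one

lemma push_ker {A B : Type} [Fintype B] {V : Finset A} (Q : ({x // x ∈ V} → B) → ℝ) {n : ℕ}
    (t : Fin n → {x // x ∈ V}) (b : Fin n → B) (h : push Q t b ≠ 0) (i i' : Fin n)
    (hi : t i = t i') : b i = b i' := by
  obtain ⟨g, -, hg⟩ := Finset.exists_ne_zero_of_sum_ne_zero h
  have : g ∘ t = b := by
    by_contra h'
    exact hg (if_neg h')
  rw [← this]
  simp [hi]

lemma push_sum {A B : Type} [Fintype B] {V : Finset A} (Q : ({x // x ∈ V} → B) → ℝ) {n : ℕ}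
    (t : Fin n → {x // x ∈ V}) (P : (Fin n → B) → Prop) [DecidablePred P] :
    (∑ b, if P b then push Q t b else 0) = ∑ g, if P (g ∘ t) then Q g else 0 := by
  unfold push
  have : ∀ b, (if P b then ∑ g : {x // x ∈ V} → B, (if g ∘ t = b then Q g else 0) else 0) =
      ∑ g : {x // x ∈ V} → B, if g ∘ t = b then (if P b then Q g else 0) else 0 := by
    intro b
    split_ifs <;> simp
  rw [Finset.sum_congr rfl fun b _ => this b, Finset.sum_comm]
  refine Finset.sum_congr rfl fun g _ => ?_
  rw [Finset.sum_ite_eq]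
  simp

lemma push_proj {A B : Type} [Fintype B] {U V : Finset A} (hUV : U ⊆ V)
    (QU : ({x // x ∈ U} → B) → ℝ) (QV : ({x // x ∈ V} → B) → ℝ)
    (hQ : ∀ f : {x // x ∈ U} → B, QU f = ∑ g : {x // x ∈ V} → B,
            if ∀ u : {x // x ∈ U}, g ⟨u.1, hUV u.2⟩ = f u then QV g else 0)
    {n m : ℕ} (t : Fin n → {x // x ∈ V}) (s : Fin m → {x // x ∈ U}) (iv : Fin m → Fin n)
    (hs : ∀ i, (s i).1 = (t (iv i)).1) (b : Fin m → B) :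
    push QU s b = ∑ b' : Fin n → B, if b' ∘ iv = b then push QV t b' else 0 := by
  rw [push_sum QV t (fun b' => b' ∘ iv = b)]
  unfold push
  have : ∀ f : {x // x ∈ U} → B, (if f ∘ s = b then QU f else 0) =
      ∑ g : {x // x ∈ V} → B, if (fun u : {x // x ∈ U} => g ⟨u.1, hUV u.2⟩) = f then
        (if f ∘ s = b then QV g else 0) else 0 := by
    intro f
    rw [hQ f]
    split_ifs <;> simp [funext_iff]
  rw [Finset.sum_congr rfl fun b _ => this b, Finset.sum_comm]
  refine Finset.sum_congr rfl fun g _ => ?_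
  rw [Finset.sum_ite_eq, if_pos (Finset.mem_univ _)]
  have : (fun u : {x // x ∈ U} => g ⟨u.1, hUV u.2⟩) ∘ s = (g ∘ t) ∘ iv := by
    funext i
    simp only [Function.comp]
    congr 1
    exact Subtype.ext (hs i)
  rw [this]

/-- The tuple `t` as a tuple in its image. -/
def imTup {A : Type} {n : ℕ} (t : Fin n → A) : Fin n → {x // x ∈ Finset.univ.image t} :=
  fun i => ⟨t i, Finset.mem_image_of_mem _ (Finset.mem_univ i)⟩

lemma imTup_surj {A : Type} {n : ℕ} (t : Fin n → A) : Function.Surjective (imTup t) := by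
  rintro ⟨x, hx⟩
  obtain ⟨i, -, rfl⟩ := Finset.mem_image.1 hx
  exact ⟨i, rfl⟩

/-- The SA weights in tuple form. -/
def starW {A B : Type} [Fintype B] {AA : Struct σ ar A} {k : ℕ}
    (pV : (V : Finset A) → ({x // x ∈ V} → B) → ℝ)
    (pC : (c : Cons AA) → ({x // x ∈ tsupp c} → B) → ℝ) :
    StarUniv AA k → ((Σ j : Fin k, Fin (j.1 + 1) → B) ⊕ (Σ R : σ, Fin (ar R) → B)) → ℝ
  | .inl t, .inl b => if h : b.1 = t.1 then
      push (pV (Finset.univ.image t.2)) (imTup t.2) (h ▸ b.2) else 0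
  | .inr c, .inr b => if h : b.1 = c.1 then
      push (V := Finset.univ.image c.2.1) (pC c) (imTup c.2.1) (h ▸ b.2) else 0
  | .inl _, .inr _ => 0
  | .inr _, .inl _ => 0

lemma exists_enum {A : Type} (k : ℕ) (V : Finset A) (h : V.Nonempty ∧ V.card ≤ k) :
    ∃ j : Fin k, Nonempty (Fin (j.1 + 1) ≃ {x // x ∈ V}) := by
  have h1 := h.1.card_pos
  refine ⟨⟨V.card - 1, by omega⟩, ⟨(finCongr ?_).trans V.equivFin.symm⟩⟩
  simp only
  omega

lemma sa_transfer [Fintype σ] {A A' B : Type} [Fintype A] [Fintype A'] [Fintype B]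
    (k : ℕ) (AA : Struct σ ar A) (AA' : Struct σ ar A') (BB : Struct σ ar B)
    (h : EquivK k AA AA') (hS : SAfeasible k AA BB) : SAfeasible k AA' BB := by
  obtain ⟨I, J, p, q, p', q', cpar, dpar, hE, hE', hcl, -⟩ := h
  obtain ⟨pV, pC, b1, b2, s1, s2, s3, s4⟩ := hS
  choose jj hj using exists_enum (A := A') k
  let ee := fun V h => Classical.choice (hj V h)
  let W := starW (k := k) pV pC
  have Wb : ∀ x y, 0 ≤ W x y ∧ W x y ≤ 1 := by
    rintro (⟨j, t⟩ | c) (⟨j', b⟩ | ⟨R, b⟩)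
    · simp only [W, starW]
      split_ifs
      · refine push_bounds _ _ (imTup_surj t) _ (fun g => b1 _ _ ?_ ?_)
        · exact ⟨t 0, Finset.mem_image_of_mem _ (Finset.mem_univ _)⟩
        · refine Finset.card_image_le.trans ?_
          simp only [Finset.card_univ, Fintype.card_fin]
          omega
      · simp
    · simp [W, starW]
    · simp [W, starW]
    · simp only [W, starW]
      split_ifs
      · exact push_bounds (V := Finset.univ.image c.2.1) _ _ (imTup_surj c.2.1) _ (fun g => b2 _ _)
      · simp
  have WT : ∀ (j : Fin k) (t : Fin (j.1 + 1) → A) (b : Fin (j.1 + 1) → B),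
      W (Sum.inl ⟨j, t⟩) (Sum.inl ⟨j, b⟩) = push (pV (Finset.univ.image t)) (imTup t) b :=
    fun j t b => dif_pos rfl
  have WC : ∀ (R : σ) (v : Fin (ar R) → A) (hv : v ∈ AA.rel R) (b : Fin (ar R) → B),
      W (Sum.inr ⟨R, ⟨v, hv⟩⟩) (Sum.inr ⟨R, b⟩) =
        push (V := Finset.univ.image v) (pC ⟨R, ⟨v, hv⟩⟩) (imTup v) b :=
    fun R v hv b => dif_pos rfl
  let x' : ∀ V : Finset A', V.Nonempty ∧ V.card ≤ k → StarUniv AA' k :=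
    fun V h => Sum.inl ⟨jj V h, fun i => (ee V h i).1⟩
  let pV' : (V : Finset A') → ({x // x ∈ V} → B) → ℝ := fun V f =>
    if h : V.Nonempty ∧ V.card ≤ k then
      avgOn p (p' (x' V h)) (fun x => W x (Sum.inl ⟨jj V h, fun i => f (ee V h i)⟩)) else 0
  have pV'_eq : ∀ V (h : V.Nonempty ∧ V.card ≤ k) f, pV' V f =
      avgOn p (p' (x' V h)) (fun x => W x (Sum.inl ⟨jj V h, fun i => f (ee V h i)⟩)) :=
    fun V h f => dif_pos h
  let pC' : (c : Cons AA') → ({x // x ∈ tsupp c} → B) → ℝ := fun c f =>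
    avgOn p (p' (Sum.inr c)) (fun x => W x (Sum.inr ⟨c.1, fun i => f ⟨c.2.1 i, mem_tsupp c i⟩⟩))
  refine ⟨pV', pC', ?_, ?_, ?_, ?_, ?_, ?_⟩
  · intro V f h1 h2
    rw [pV'_eq V ⟨h1, h2⟩]
    exact ⟨avgOn_nonneg _ _ _ fun x => (Wb _ _).1, avgOn_le_one _ _ _ fun x => (Wb _ _).2⟩
  · intro c f
    exact ⟨avgOn_nonneg _ _ _ fun x => (Wb _ _).1, avgOn_le_one _ _ _ fun x => (Wb _ _).2⟩
  · -- SA1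
    intro V h1 h2
    have hV : V.Nonempty ∧ V.card ≤ k := ⟨h1, h2⟩
    have e0 := avgOn_sum p (p' (x' V hV)) (fun _ : {x // x ∈ V} → B => True)
      (fun f x => W x (Sum.inl ⟨jj V hV, fun i => f (ee V hV i)⟩))
    simp only [if_true] at e0
    rw [Finset.sum_congr rfl fun f _ => pV'_eq V hV f, e0]
    apply avgOn_one
    · intro x hx
      obtain ⟨c, -, hc⟩ := exists_cons hE hE' x (x' V hV) hx
        ⟨.TS (jj V hV) ∅, ⟨fun _ => x' V hV, fun i => (ee V hV i).1, by simp, rfl⟩⟩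
      obtain ⟨u, ⟨t, -, hu⟩, -, hi⟩ := lab_spec hc
      have hx2 := (hi (0 : Fin 1)).2 rfl
      rw [hu] at hx2
      subst hx2
      have e1 : ∑ f : {x // x ∈ V} → B,
          W (Sum.inl ⟨jj V hV, t⟩) (Sum.inl ⟨jj V hV, fun i => f (ee V hV i)⟩) =
          ∑ b : Fin ((jj V hV).1 + 1) → B, push (pV (Finset.univ.image t)) (imTup t) b := by
        refine Fintype.sum_equiv ((ee V hV).symm.arrowCongr (Equiv.refl B)) _ _ fun f => ?_
        simp only [W, starW]
        exact dif_pos trivial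
      rw [e1]
      have e2 := push_sum (pV (Finset.univ.image t)) (imTup t) (fun _ => True)
      simp only [if_true] at e2
      rw [e2]
      apply s1
      · exact ⟨t 0, Finset.mem_image_of_mem _ (Finset.mem_univ _)⟩
      · refine Finset.card_image_le.trans ?_
        simp only [Finset.card_univ, Fintype.card_fin]
        omega
    · have h3 := hcl (p' (x' V hV))
      have hne : Nonempty {b : StarUniv AA' k // p' b = p' (x' V hV)} := ⟨⟨_, rfl⟩⟩
      have h4 := Nat.card_pos (α := {b : StarUniv AA' k // p' b = p' (x' V hV)})
      rw [← h3] at h4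
      obtain ⟨⟨x, hx⟩⟩ := (Nat.card_pos_iff.1 h4).1
      exact ⟨x, hx⟩
  · -- SA2
    intro U V hUV h1 h2 f
    have hV : V.Nonempty ∧ V.card ≤ k := ⟨h1.mono hUV, h2⟩
    have hU : U.Nonempty ∧ U.card ≤ k := ⟨h1, (Finset.card_le_card hUV).trans h2⟩
    rw [pV'_eq U hU f]
    simp only [pV'_eq V hV]
    rw [avgOn_sum]
    let iv : Fin ((jj U hU).1 + 1) → Fin ((jj V hV).1 + 1) :=
      fun i => (ee V hV).symm ⟨(ee U hU i).1, hUV (ee U hU i).2⟩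
    have hiv : ∀ i, (ee V hV (iv i)) = ⟨(ee U hU i).1, hUV (ee U hU i).2⟩ := by
      intro i; simp [iv]
    have hx'U : x' U hU = Sum.inl ⟨jj U hU, (fun i => (ee V hV i).1) ∘ iv⟩ := by
      simp only [x']
      congr 2
      funext i
      simp [hiv]
    rw [hx'U]
    refine (avg_eq hE hE' ⟨.TI (jj V hV) (jj U hU) iv,
      ⟨![x' V hV, Sum.inl ⟨jj U hU, (fun i => (ee V hV i).1) ∘ iv⟩], fun i => (ee V hV i).1, rfl⟩⟩
      (0 : Fin 2) (1 : Fin 2) _ _ ?_).symm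
    intro c x y hx hy _
    obtain ⟨u, ⟨t, hu⟩, rfl, hi⟩ := lab_spec hx
    obtain ⟨u2, hu2, hcc, hi2⟩ := lab_spec hy
    obtain rfl : u = u2 := cons_mk_inj (XX := starStruct AA k) hcc
    have hx2 := (hi (0 : Fin 2)).2 rfl
    have hy2 := (hi2 (1 : Fin 2)).2 rfl
    rw [hu] at hx2 hy2
    subst hx2 hy2
    have hsub : Finset.univ.image (t ∘ iv) ⊆ Finset.univ.image t := by
      intro a
      simp only [Finset.mem_image]
      rintro ⟨i, hi, rfl⟩
      exact ⟨iv i, by simp⟩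
    have e1 := push_proj (U := Finset.univ.image (t ∘ iv)) (V := Finset.univ.image t) hsub
      (pV _) (pV _) (fun f => s2 _ _ hsub
        ⟨t (iv 0), Finset.mem_image_of_mem (t ∘ iv) (Finset.mem_univ 0)⟩ (by
          refine Finset.card_image_le.trans ?_
          simp only [Finset.card_univ, Fintype.card_fin]
          omega) f) (imTup t) (imTup (t ∘ iv)) iv (fun i => rfl) (fun i => f (ee U hU i))
    refine Eq.trans ?_ (e1.symm.trans (WT _ (t ∘ iv) _).symm)
    refine Fintype.sum_equiv ((ee V hV).symm.arrowCongr (Equiv.refl B)) _ _ fun g => ?_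
    have e2 : (∀ u : {x // x ∈ U}, g ⟨u.1, hUV u.2⟩ = f u) ↔
        ((ee V hV).symm.arrowCongr (Equiv.refl B)) g ∘ iv = fun i => f (ee U hU i) := by
      rw [funext_iff, ← (ee U hU).forall_congr_right]
      simp [Equiv.arrowCongr, hiv]
    exact if_congr e2 (WT _ t _) rfl
  · -- SA3
    intro c U hUc h1 h2 f
    have hU : U.Nonempty ∧ U.card ≤ k := ⟨h1, h2⟩
    rw [pV'_eq U hU f]
    simp only [pC']
    rw [avgOn_sum]
    obtain ⟨R, v', hv'⟩ := c
    have hex : ∀ i, ∃ l, v' l = (ee U hU i).1 := by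
      intro i
      obtain ⟨l, -, hl⟩ := Finset.mem_image.1 (hUc (ee U hU i).2)
      exact ⟨l, hl⟩
    choose iv hiv using hex
    have hx'U : x' U hU = Sum.inl ⟨jj U hU, v' ∘ iv⟩ := by
      simp only [x']
      congr 2
      funext i
      simp [hiv]
    rw [hx'U]
    refine (avg_eq hE hE' ⟨.RI R (jj U hU) iv,
      ⟨![Sum.inr ⟨R, ⟨v', hv'⟩⟩, Sum.inl ⟨jj U hU, v' ∘ iv⟩], v', hv', rfl⟩⟩
      (0 : Fin 2) (1 : Fin 2) _ _ ?_).symm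
    intro c x y hx hy hp
    obtain ⟨u, ⟨v, hv, hu⟩, rfl, hi⟩ := lab_spec hx
    obtain ⟨u2, hu2, hcc, hi2⟩ := lab_spec hy
    obtain rfl : u = u2 := cons_mk_inj (XX := starStruct AA k) hcc
    have hx2 := (hi (0 : Fin 2)).2 rfl
    have hy2 := (hi2 (1 : Fin 2)).2 rfl
    rw [hu] at hx2 hy2
    subst hx2 hy2
    have hker : ∀ l l', v' l = v' l' → v l = v l' := by
      intro l l' hl
      obtain ⟨c, -, hc⟩ := exists_cons hE hE' _ (Sum.inr ⟨R, ⟨v', hv'⟩⟩) hp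
        ⟨.RS R {l, l'}, ⟨fun _ => Sum.inr ⟨R, ⟨v', hv'⟩⟩, v', hv', by simp [hl], rfl⟩⟩
      obtain ⟨u, ⟨v0, hv0, hS, hu⟩, -, hi⟩ := lab_spec hc
      have hx2 := (hi (0 : Fin 1)).2 rfl
      rw [hu] at hx2
      have : v0 = v := cons_mk_inj (Sum.inr_injective hx2)
      subst this
      exact hS l (by simp) l' (by simp)
    have hsub : Finset.univ.image (v ∘ iv) ⊆ Finset.univ.image v := by
      intro a
      simp only [Finset.mem_image]
      rintro ⟨i, hi, rfl⟩
      exact ⟨iv i, by simp⟩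
    have e1 := push_proj (U := Finset.univ.image (v ∘ iv)) (V := Finset.univ.image v) hsub
      (pV _) (pC ⟨R, ⟨v, hv⟩⟩) (fun f => s3 ⟨R, ⟨v, hv⟩⟩ _ hsub
        ⟨v (iv 0), Finset.mem_image_of_mem (v ∘ iv) (Finset.mem_univ 0)⟩ (by
          refine Finset.card_image_le.trans ?_
          simp only [Finset.card_univ, Fintype.card_fin]
          omega) f) (imTup v) (imTup (v ∘ iv)) iv (fun i => rfl) (fun i => f (ee U hU i))
    refine Eq.trans ?_ (e1.symm.trans (WT _ (v ∘ iv) _).symm)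
    let Φ : ({x // x ∈ Finset.univ.image v'} → B) → (Fin (ar R) → B) := fun g => g ∘ imTup v'
    have hΦ : Function.Injective Φ := (imTup_surj v').injective_comp_right
    rw [← Finset.sum_subset (Finset.subset_univ (Finset.univ.image Φ)), Finset.sum_image hΦ.injOn]
    · refine Finset.sum_congr rfl fun g _ => ?_
      have e2 : (∀ u : {x // x ∈ U}, g ⟨u.1, hUc u.2⟩ = f u) ↔
          (Φ g) ∘ iv = fun i => f (ee U hU i) := by
        rw [funext_iff, ← (ee U hU).forall_congr_right]
        refine forall_congr' fun i => ?_
        have : imTup v' (iv i) = ⟨(ee U hU i).1, hUc (ee U hU i).2⟩ := Subtype.ext (hiv i)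
        simp only [Φ, Function.comp, this]
        rfl
      exact if_congr e2 (WC R v hv _) rfl
    · intro b _ hb
      split_ifs
      · by_contra hne
        apply hb
        have hk := push_ker _ _ _ hne
        refine Finset.mem_image.2 ⟨fun a => b (imTup_surj v' a).choose, Finset.mem_univ _, ?_⟩
        funext i
        apply hk
        apply Subtype.ext
        apply hker
        exact congrArg Subtype.val (imTup_surj v' (imTup v' i)).choose_spec
      · rfl
  · -- SA4
    intro c f hf
    have : pC' c f = avgOn p (p' (Sum.inr c)) (fun _ => 0) := by
      refine avgOn_congr _ _ _ _ ?_
      rintro (⟨j, t⟩ | ⟨R, v, hv⟩) -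
      · rfl
      · obtain ⟨R', v', hv'⟩ := c
        simp only [W, starW]
        split_ifs with hR
        · obtain rfl : R' = R := hR
          refine Finset.sum_eq_zero fun g _ => ?_
          split_ifs with hg
          · apply s4
            have hg2 : g ∘ imTup v = fun i => f ⟨v' i, mem_tsupp (AA := AA') ⟨R', ⟨v', hv'⟩⟩ i⟩ := hg
            intro hm
            apply hf
            have hm2 : g ∘ imTup v ∈ BB.rel R' := hm
            rw [hg2] at hm2
            exact hm2
          · rfl
        · rfl
    rw [this]
    simp [avgOn]

lemma equivK_symm {A A' : Type} (k : ℕ) (AA : Struct σ ar A) (AA' : Struct σ ar A')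
    (h : EquivK k AA AA') : EquivK k AA' AA := by
  obtain ⟨I, J, p, q, p', q', cpar, dpar, hE, hE', h1, h2⟩ := h
  exact ⟨I, J, p', q', p, q, cpar, dpar, hE', hE, fun i => (h1 i).symm, fun j => (h2 j).symm⟩

end Proof11

theorem stmt11 [Fintype σ] {A A' B : Type} [Fintype A] [Fintype A'] [Fintype B]
    (k : ℕ) (hk : 1 ≤ k)
    (AA : Struct σ ar A) (AA' : Struct σ ar A') (BB : Struct σ ar B)
    (h : EquivK k AA AA') :
    SAfeasible k AA BB ↔ SAfeasible k AA' BB := by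
  exact ⟨sa_transfer k AA AA' BB h, sa_transfer k AA' AA BB (equivK_symm k AA AA' h)⟩

end
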